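/- The countable power R_S^ω of the Sorgenfrey line and the countable power I_S^ω of the irrational Sorgenfrey line have a π-tree. -/

import Mathlib

open Set

universe u v

/-- A family `γ` π-refines `δ`: every nonempty member of `δ` contains a
nonempty member of `γ`. -/
def PiRefines {α : Type*} (γ δ : Set (Set α)) : Prop :=
  ∀ D ∈ δ, D.Nonempty → ∃ G ∈ γ, G.Nonempty ∧ G ⊆ D

/-- The finite intersection property. -/
def HasFIP {α : Type*} (γ : Set (Set α)) : Prop :=
  ∀ δ : Set (Set α), δ ⊆ γ → δ.Finite → δ.Nonempty → (⋂₀ δ).Nonempty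

/-- `cofin A` is the family of complements in `A` of finite subsets of `A`. -/
def cofin (A : Set ℕ) : Set (Set ℕ) :=
  {B | ∃ C : Set ℕ, C.Finite ∧ C ⊆ A ∧ B = A \ C}

/-- A foliage tree on `X`: a set-theoretic tree (strict partial order with
well-ordered sets of strict predecessors) with a leaf (a subset of `X`)
attached to each node. -/
structure FoliageTree (X : Type u) where
  Node : Type
  lt : Node → Node → Prop
  lt_irrefl : ∀ a, ¬ lt a a
  lt_trans : ∀ {a b c}, lt a b → lt b c → lt a c
  wellOrdered : ∀ a : Node, IsWellOrder {b : Node // lt b a} fun x y => lt x.1 y.1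
  leaf : Node → Set X

/-- Strict proper-extension order on finite sequences of naturals. -/
def seqLT (a b : List ℕ) : Prop := a <+: b ∧ a ≠ b

namespace FoliageTree

variable {X : Type u}

/-- The sons (immediate successors) of a node. -/
def Sons (F : FoliageTree X) (x : F.Node) : Set F.Node :=
  {s | F.lt x s ∧ ¬ ∃ t, F.lt x t ∧ F.lt t s}

/-- A node is maximal if it has no strict successor. -/
def IsMaxNode (F : FoliageTree X) (x : F.Node) : Prop := ¬ ∃ s, F.lt x s

/-- A chain of nodes. -/
def IsChainN (F : FoliageTree X) (C : Set F.Node) : Prop :=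
  ∀ x ∈ C, ∀ y ∈ C, F.lt x y ∨ x = y ∨ F.lt y x

/-- A branch is a maximal chain. -/
def IsBranch (F : FoliageTree X) (B : Set F.Node) : Prop :=
  F.IsChainN B ∧ ∀ C, F.IsChainN C → B ⊆ C → B = C

/-- The height of a node: the order type of its set of strict predecessors. -/
noncomputable def height (F : FoliageTree X) (v : F.Node) : Ordinal :=
  @Ordinal.type {b : F.Node // F.lt b v} (fun x y => F.lt x.1 y.1) (F.wellOrdered v)

/-- `shoot F v`: unions of leaves over cofinite sets of sons of `v`. -/
def shoot (F : FoliageTree X) (v : F.Node) : Set (Set X) :=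
  {S | ∃ C : Set F.Node, C ⊆ F.Sons v ∧ (F.Sons v \ C).Finite ∧ S = ⋃ s ∈ C, F.leaf s}

/-- `scope F p`: the nodes whose leaf contains `p`. -/
def scope (F : FoliageTree X) (p : X) : Set F.Node := {x | p ∈ F.leaf x}

/-- The union of all leaves. -/
def flesh (F : FoliageTree X) : Set X := ⋃ x, F.leaf x

/-- `F` is a foliage `ω,ω`-tree: its skeleton is order-isomorphic to
`(ω^{<ω}, ⊂)`. -/
def IsOmegaOmegaTree (F : FoliageTree X) : Prop := Nonempty (F.lt ≃r seqLT)

/-- `F` is locally strict: the leaf of every non-maximal node is the disjoint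
union of the leaves of its sons. -/
def LocallyStrict (F : FoliageTree X) : Prop :=
  ∀ x, ¬ F.IsMaxNode x →
    F.leaf x = (⋃ s ∈ F.Sons x, F.leaf s) ∧
      ∀ s ∈ F.Sons x, ∀ t ∈ F.Sons x, s ≠ t → Disjoint (F.leaf s) (F.leaf t)

/-- `F` has strict branches: it has nodes, and along every branch the
intersection of the leaves is a singleton. -/
def StrictBranches (F : FoliageTree X) : Prop :=
  Nonempty F.Node ∧ ∀ B, F.IsBranch B → ∃ p, (⋂ x ∈ B, F.leaf x) = {p}

/-- `r` is the root: the least node. -/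
def IsRoot (F : FoliageTree X) (r : F.Node) : Prop := ∀ x, r = x ∨ F.lt r x

/-- All leaves are open. -/
def OpenIn [TopologicalSpace X] (F : FoliageTree X) : Prop := ∀ x, IsOpen (F.leaf x)

/-- `F` is a Baire foliage tree on `X`. -/
def IsBaireFoliageTree [TopologicalSpace X] (F : FoliageTree X) : Prop :=
  F.OpenIn ∧ F.LocallyStrict ∧ F.IsOmegaOmegaTree ∧ F.StrictBranches ∧
    ∃ r, F.IsRoot r ∧ F.leaf r = Set.univ

/-- `F` grows into `X`. -/
def GrowsInto [TopologicalSpace X] (F : FoliageTree X) : Prop :=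
  ∀ p : X, ∀ U ∈ nhds p, ∃ z ∈ F.scope p, PiRefines (F.shoot z) {U}

/-- `F` is a π-tree on `X`. -/
def IsPiTree [TopologicalSpace X] (F : FoliageTree X) : Prop :=
  F.IsBaireFoliageTree ∧ F.GrowsInto

/-- `rise F p U`: the set of (finite) heights of nodes `v` whose leaf contains
`p` and whose shoot π-refines `{U}`. -/
noncomputable def rise (F : FoliageTree X) (p : X) (U : Set X) : Set ℕ :=
  {n | ∃ v ∈ F.scope p, PiRefines (F.shoot v) {U} ∧ F.height v = (n : Ordinal)}

/-- `Rise F`: all sets `rise F p U` for `p ∈ X` and `U` a neighbourhood of `p`. -/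
def Rise [TopologicalSpace X] (F : FoliageTree X) : Set (Set ℕ) :=
  {R | ∃ p U, U ∈ nhds p ∧ R = F.rise p U}

end FoliageTree

/-- The Sorgenfrey line: the reals with the topology generated by the
half-open intervals `[a, b)`. -/
def SorgLine : Type := ℝ

instance : TopologicalSpace SorgLine :=
  TopologicalSpace.generateFrom {s : Set ℝ | ∃ a b : ℝ, s = Set.Ico a b}

/-- The set of irrational points of the Sorgenfrey line; the irrational
Sorgenfrey line is the corresponding subspace. -/
def IrrSorg : Set SorgLine := {x : SorgLine | Irrational (show ℝ from x)}

/-!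
A π-tree with skeleton `ω^{<ω}` amounts to a continuous bijective coding `X → ω^ω` such that, for
every neighbourhood `U` of `p`, some `n` has the property that `U` contains all points whose code
agrees with that of `p` below `n` and has a large `n`-th digit.

Let `S` be a subspace of the Sorgenfrey line with countable complement. Cut the extended real line
recursively into half-open cells: at stage `n` every cell is cut at the `n`-th point of a dense
sequence that enumerates, among others, all points missing from `S`, and that point is discarded if
it is missing. The pieces of a cell are indexed by `ω × ω` so that a large first index means being
close to the right end. Right endpoints strictly decrease along a branch, so the supremum of the
left endpoints lies in all cells of the branch; density makes it the only such point. If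
`p ∈ [a, b)` at stage `n`, the pieces of `[a, b)` with large first index lie in `[p, b)`, and `b` is
close to `p` for *all* large `n`.

This uniformity passes to countable products. The `n`-th digit of the product coding packs the
digits on the `n`-th diagonal into a pair whose first component is at most all of theirs, so that
finitely many coordinates are controlled at once. Listing both components of each pair in turn
gives a coding by natural numbers.
-/

section Coding

open Filter Topology PiNat

variable {X α : Type*} [TopologicalSpace α]

/-- All points whose code agrees with that of `p` below `n` and has an `n`-th digit of large rank
lie in `U`. -/
def GrowsAt (rank : α → ℕ) (E : X → ℕ → α) (p : X) (U : Set X) (n : ℕ) : Prop :=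
  ∃ K, ∀ x, E x ∈ cylinder (E p) n → K ≤ rank (E x n) → x ∈ U

variable [TopologicalSpace X]

/-- A continuous bijective coding of `X` by sequences of digits such that every neighbourhood of a
point is reached by digits of large rank at some position. With `rank = id`, this is the coding of
points by branches that a π-tree induces. -/
structure IsGrowingCoding (rank : α → ℕ) (E : X → ℕ → α) : Prop where
  continuous : Continuous E
  bijective : Function.Bijective E
  exists_growsAt : ∀ p, ∀ U ∈ 𝓝 p, ∃ n, GrowsAt rank E p U n

/-- A growing coding in which every neighbourhood is reached at all but finitely many positions; in
contrast to `IsGrowingCoding`, this passes to countable products. -/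
structure IsEventuallyGrowingCoding (rank : α → ℕ) (E : X → ℕ → α) : Prop where
  continuous : Continuous E
  bijective : Function.Bijective E
  eventually_growsAt : ∀ p, ∀ U ∈ 𝓝 p, ∀ᶠ n in atTop, GrowsAt rank E p U n

end Coding

section Sequences

open PiNat

variable {α : Type*}

/-- The initial segment `⟨f 0, …, f (n - 1)⟩` of a sequence. -/
def truncation (f : ℕ → α) (n : ℕ) : List α := (List.range n).map f

@[simp]
theorem length_truncation (f : ℕ → α) (n : ℕ) : (truncation f n).length = n := by
  simp [truncation]

theorem truncation_succ (f : ℕ → α) (n : ℕ) : truncation f (n + 1) = truncation f n ++ [f n] := by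
  simp [truncation, List.range_succ]

theorem truncation_eq_truncation_iff {f g : ℕ → α} {n : ℕ} :
    truncation f n = truncation g n ↔ f ∈ cylinder g n := by
  simp [truncation, mem_cylinder_iff]

theorem seqLT.length_lt {a b : List ℕ} (h : seqLT a b) : a.length < b.length :=
  h.1.length_le.lt_of_ne fun hab => h.2 (h.1.eq_of_length hab)

theorem seqLT.trans {a b c : List ℕ} (hab : seqLT a b) (hbc : seqLT b c) : seqLT a c :=
  ⟨hab.1.trans hbc.1, fun hac => (hab.length_lt.trans hbc.length_lt).ne (congrArg _ hac)⟩

theorem seqLT_append_singleton (l : List ℕ) (a : ℕ) : seqLT l (l ++ [a]) :=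
  ⟨List.prefix_append _ _, by simp⟩

theorem seqLT_iff_length_lt {a b c : List ℕ} (hac : seqLT a c) (hbc : seqLT b c) :
    seqLT a b ↔ a.length < b.length :=
  ⟨seqLT.length_lt, fun h =>
    ⟨List.prefix_of_prefix_length_le hac.1 hbc.1 h.le, fun hab => h.ne (congrArg _ hab)⟩⟩

theorem isWellOrder_seqLT (a : List ℕ) :
    IsWellOrder {b // seqLT b a} fun x y => seqLT x.1 y.1 :=
  RelEmbedding.isWellOrder (s := ((· < ·) : ℕ → ℕ → Prop))
    { toFun x := x.1.length
      inj' x y hxy := Subtype.ext <|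
        (List.prefix_of_prefix_length_le x.2.1 y.2.1 hxy.le).eq_of_length hxy
      map_rel_iff' {x y} := (seqLT_iff_length_lt x.2 y.2).symm }

section MaxChain

variable {B : Set (List α)} (hB : IsMaxChain (· <+: ·) B)
include hB

theorem mem_of_isMaxChain_of_forall {l : List α} (hl : ∀ m ∈ B, l <+: m ∨ m <+: l) : l ∈ B :=
  (hB.2 (hB.1.insert fun m hm _ => hl m hm) (subset_insert l B)).ge (mem_insert l B)

theorem mem_of_isMaxChain_of_prefix {l m : List α} (hml : m <+: l) (hl : l ∈ B) : m ∈ B :=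
  mem_of_isMaxChain_of_forall hB fun _ hb => (hB.1.total hl hb).elim
    (fun hlb => Or.inl (hml.trans hlb)) (List.prefix_or_prefix_of_prefix hml)

theorem exists_mem_le_length_of_isMaxChain [Nonempty α] (n : ℕ) : ∃ l ∈ B, n ≤ l.length := by
  induction n with
  | zero => exact ⟨[], mem_of_isMaxChain_of_forall hB fun _ _ => Or.inl List.nil_prefix, le_rfl⟩
  | succ n ih =>
    obtain ⟨l, hl, hln⟩ := ih
    by_contra! hshort
    have hlongest : ∀ m ∈ B, m <+: l := fun m hm => (hB.1.total hl hm).elim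
      (fun hlm => (hlm.eq_of_length_le (by have := hshort m hm; lia)).symm ▸ List.prefix_rfl) id
    have hmem : l ++ [Classical.arbitrary α] ∈ B := mem_of_isMaxChain_of_forall hB fun m hm =>
      Or.inr ((hlongest m hm).trans (List.prefix_append _ _))
    simpa using (hshort _ hmem).trans_le (Nat.succ_le_succ hln)

theorem exists_eq_range_truncation_of_isMaxChain [Nonempty α] : ∃ f, B = range (truncation f) := by
  choose L hLB hL using fun n => exists_mem_le_length_of_isMaxChain hB (n + 1)
  let f n := (L n)[n]'(hL n)
  have htrunc : ∀ l ∈ B, truncation f l.length = l := fun l hl =>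
    List.ext_getElem (by simp) fun i _ hi => by
      simp only [truncation, List.getElem_map, List.getElem_range, f]
      rcases hB.1.total hl (hLB i) with h | h
      · exact (h.getElem hi).symm
      · exact h.getElem (hL i)
  refine ⟨f, Subset.antisymm (fun l hl => ⟨l.length, htrunc l hl⟩) ?_⟩
  rintro _ ⟨n, rfl⟩
  have htake := mem_of_isMaxChain_of_prefix hB (List.take_prefix n (L n)) (hLB n)
  have hlen : ((L n).take n).length = n := by have := hL n; simp; lia
  rw [← hlen, htrunc _ htake]
  exact htake

end MaxChain

section CodeCylinder

variable {X : Type*} {E : X → ℕ → α}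

variable (E) in
/-- The set of points whose code starts with `l`. -/
def codeCylinder (l : List α) : Set X := {x | truncation (E x) l.length = l}

theorem mem_codeCylinder_append_singleton_iff {l : List α} {a : α} {x : X} :
    x ∈ codeCylinder E (l ++ [a]) ↔ x ∈ codeCylinder E l ∧ E x l.length = a := by
  simp [codeCylinder, truncation_succ]

theorem codeCylinder_truncation (f : ℕ → α) (n : ℕ) :
    codeCylinder E (truncation f n) = E ⁻¹' cylinder f n := by
  ext x
  simp [codeCylinder, truncation_eq_truncation_iff]

theorem isOpen_codeCylinder [TopologicalSpace X] [TopologicalSpace α] [DiscreteTopology α]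
    (hE : Continuous E) (l : List α) : IsOpen (codeCylinder E l) := by
  refine isOpen_iff_mem_nhds.2 fun p (hp : truncation (E p) l.length = l) => ?_
  rw [← hp, codeCylinder_truncation]
  exact ((isOpen_cylinder _ _ _).preimage hE).mem_nhds (self_mem_cylinder _ _)

end CodeCylinder

end Sequences

namespace FoliageTree

open PiNat

variable {X : Type*} (E : X → ℕ → ℕ)

/-- The foliage `ω,ω`-tree of a coding, whose leaves are the sets `codeCylinder E l`. -/
abbrev ofCoding : FoliageTree X where
  Node := List ℕ
  lt := seqLT
  lt_irrefl _ h := h.2 rfl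
  lt_trans := seqLT.trans
  wellOrdered := isWellOrder_seqLT
  leaf := codeCylinder E

theorem sons_ofCoding (l : List ℕ) : (ofCoding E).Sons l = range fun a : ℕ => l ++ [a] := by
  ext s
  constructor
  · rintro ⟨⟨⟨t, rfl⟩, hne⟩, himm⟩
    match t with
    | [] => simp at hne
    | [a] => exact ⟨a, rfl⟩
    | a :: _ :: t =>
      exact absurd ⟨l ++ [a], seqLT_append_singleton l a, ⟨_, List.append_assoc ..⟩, by simp⟩ himm
  · rintro ⟨a, rfl⟩
    refine ⟨seqLT_append_singleton l a, fun ⟨t, hlt, hta⟩ => ?_⟩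
    have := hlt.length_lt
    have := hta.length_lt
    simp only [List.length_append, List.length_singleton] at this
    lia

variable {E}

theorem locallyStrict_ofCoding : (ofCoding E).LocallyStrict := by
  intro (l : List ℕ) _
  rw [sons_ofCoding, biUnion_range]
  refine ⟨?_, ?_⟩
  · ext x
    simp [mem_codeCylinder_append_singleton_iff]
  · rintro _ ⟨a, rfl⟩ _ ⟨b, rfl⟩ hab
    refine Set.disjoint_left.2 fun x ha hb => hab ?_
    rw [← (mem_codeCylinder_append_singleton_iff.1 ha).2,
      ← (mem_codeCylinder_append_singleton_iff.1 hb).2]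

theorem isChainN_ofCoding_iff {C : Set (List ℕ)} :
    (ofCoding E).IsChainN C ↔ IsChain (· <+: ·) C := by
  refine ⟨fun h l hl m hm hlm => ?_, fun h l hl m hm => ?_⟩
  · rcases h l hl m hm with h | h | h
    exacts [Or.inl h.1, absurd h hlm, Or.inr h.1]
  · by_cases hlm : l = m
    · exact Or.inr (Or.inl hlm)
    · exact (h hl hm hlm).imp (⟨·, hlm⟩) fun hml => Or.inr ⟨hml, Ne.symm hlm⟩

theorem isBranch_ofCoding_iff {B : Set (List ℕ)} :
    (ofCoding E).IsBranch B ↔ IsMaxChain (· <+: ·) B :=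
  and_congr isChainN_ofCoding_iff <| forall_congr' fun _ => imp_congr isChainN_ofCoding_iff Iff.rfl

theorem strictBranches_ofCoding (hE : Function.Bijective E) : (ofCoding E).StrictBranches := by
  refine ⟨⟨([] : List ℕ)⟩, fun B hB => ?_⟩
  obtain ⟨f, rfl⟩ := exists_eq_range_truncation_of_isMaxChain (isBranch_ofCoding_iff.1 hB)
  obtain ⟨p, rfl⟩ := hE.surjective f
  refine ⟨p, ?_⟩
  simp only [biInter_range, codeCylinder_truncation]
  ext x
  simp only [mem_iInter, mem_preimage, mem_singleton_iff]
  refine ⟨fun hx => hE.injective (funext fun n => hx (n + 1) n n.lt_succ_self), ?_⟩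
  rintro rfl n
  exact self_mem_cylinder _ _

theorem isBaireFoliageTree_ofCoding [TopologicalSpace X] (hE : Continuous E)
    (hE' : Function.Bijective E) : (ofCoding E).IsBaireFoliageTree := by
  refine ⟨isOpen_codeCylinder hE, locallyStrict_ofCoding, ⟨RelIso.refl _⟩,
    strictBranches_ofCoding hE', ([] : List ℕ), fun (l : List ℕ) => ?_, ?_⟩
  · exact (eq_or_ne [] l).imp id fun hl => ⟨List.nil_prefix, hl⟩
  · exact eq_univ_of_forall fun x => rfl

theorem iUnion_codeCylinder_mem_shoot (l : List ℕ) (K : ℕ) :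
    ⋃ k ∈ Ici K, codeCylinder E (l ++ [k]) ∈ (ofCoding E).shoot l := by
  refine ⟨(fun k : ℕ => l ++ [k]) '' Ici K, ?_, ?_, by rw [biUnion_image]⟩
  · rw [sons_ofCoding]
    exact image_subset_range _ _
  · rw [sons_ofCoding]
    refine ((finite_Iio K).image fun k : ℕ => l ++ [k]).subset ?_
    rintro _ ⟨⟨k, rfl⟩, hk⟩
    exact ⟨k, mem_Iio.2 <| not_le.1 fun hKk => hk ⟨k, hKk, rfl⟩, rfl⟩

theorem growsInto_ofCoding [TopologicalSpace X] (hE : IsGrowingCoding id E) :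
    (ofCoding E).GrowsInto := by
  intro p U hU
  obtain ⟨n, K, hK⟩ := hE.exists_growsAt p U hU
  refine ⟨truncation (E p) n, ?_, ?_⟩
  · change p ∈ codeCylinder E _
    rw [codeCylinder_truncation]
    exact self_mem_cylinder _ _
  rintro _ rfl _
  refine ⟨_, iUnion_codeCylinder_mem_shoot _ K, ?_, ?_⟩
  · obtain ⟨x, hx⟩ := hE.bijective.surjective fun i => if i < n then E p i else K
    refine ⟨x, mem_iUnion₂.2 ⟨K, self_mem_Ici, mem_codeCylinder_append_singleton_iff.2 ?_⟩⟩
    rw [codeCylinder_truncation, mem_preimage, mem_cylinder_iff, hx]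
    simp +contextual
  · refine iUnion₂_subset fun k hk x hx => ?_
    rw [mem_codeCylinder_append_singleton_iff, codeCylinder_truncation, length_truncation] at hx
    exact hK x hx.1 (hx.2.symm ▸ hk)

theorem isPiTree_ofCoding [TopologicalSpace X] (hE : IsGrowingCoding id E) :
    (ofCoding E).IsPiTree :=
  ⟨isBaireFoliageTree_ofCoding hE.continuous hE.bijective, growsInto_ofCoding hE⟩

end FoliageTree

section DigitEquivs

theorem exists_equiv_prod_fst_eq {α κ : Type*} [Countable α] {f : α → κ}
    (hf : ∀ k, (f ⁻¹' {k}).Infinite) : ∃ σ : α ≃ κ × ℕ, ∀ a, (σ a).1 = f a := by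
  have fiberEquiv (k : κ) : Nonempty ({a // f a = k} ≃ ℕ) :=
    have : Infinite {a // f a = k} := (hf k).to_subtype
    ⟨(nonempty_denumerable _).some.eqv⟩
  exact ⟨(Equiv.sigmaFiberEquiv f).symm.trans <|
    (Equiv.sigmaCongrRight fun k => (fiberEquiv k).some).trans (Equiv.sigmaEquivProd κ ℕ),
    fun _ => rfl⟩

theorem exists_equiv_prod_fst_le {ι : Type*} [Finite ι] [Nonempty ι] :
    ∃ σ : (ι → ℕ × ℕ) ≃ ℕ × ℕ, ∀ w i, (σ w).1 ≤ (w i).1 := by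
  obtain ⟨σ, hσ⟩ := exists_equiv_prod_fst_eq (α := ι → ℕ × ℕ) (f := fun w => ⨅ i, (w i).1)
    fun k => (infinite_range_of_injective (f := fun j (_ : ι) => (k, j)) fun a b hab => by
      simpa using congrFun hab (Classical.arbitrary ι)).mono <| by
        rintro _ ⟨j, rfl⟩
        exact ciInf_const
  exact ⟨σ, fun w i => (hσ w).trans_le (ciInf_le (OrderBot.bddBelow _) i)⟩

end DigitEquivs

section Diagonals

open PiNat

variable {α : Type*}

/-- The `n`-th diagonal of a double sequence, read as its entries at `(i, n - i)`. -/
def diagonals (a : ℕ → ℕ → α) (n : ℕ) (i : Fin (n + 1)) : α := a i (n - i)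

theorem bijective_diagonals :
    Function.Bijective (diagonals : (ℕ → ℕ → α) → ∀ n, Fin (n + 1) → α) := by
  refine Function.bijective_iff_has_inverse.2
    ⟨fun b i m => b (i + m) ⟨i, by lia⟩, fun a => ?_, fun b => ?_⟩
  · funext i m
    simp [diagonals]
  · funext n ⟨i, hi⟩
    suffices ∀ k (hk : k = n), b k ⟨i, hk ▸ hi⟩ = b n ⟨i, hi⟩ from this _ (by simp; lia)
    rintro _ rfl
    rfl

theorem mem_cylinder_of_diagonals_mem_cylinder {a b : ℕ → ℕ → α} {n i : ℕ}
    (hab : diagonals a ∈ cylinder (diagonals b) n) : a i ∈ cylinder (b i) (n - i) := by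
  refine mem_cylinder_iff.2 fun m hm => ?_
  simpa [diagonals] using congrFun (mem_cylinder_iff.1 hab (i + m) (by lia)) ⟨i, by lia⟩

end Diagonals

section Interleave

open PiNat

variable {α : Type*}

/-- The sequence `(d 0).1, (d 0).2, (d 1).1, (d 1).2, …`. -/
def interleave (d : ℕ → α × α) (n : ℕ) : α :=
  if Even n then (d (n / 2)).1 else (d (n / 2)).2

theorem interleave_two_mul (d : ℕ → α × α) (n : ℕ) : interleave d (2 * n) = (d n).1 := by
  simp [interleave]

theorem interleave_two_mul_add_one (d : ℕ → α × α) (n : ℕ) :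
    interleave d (2 * n + 1) = (d n).2 := by
  rw [interleave, if_neg (by simp), show (2 * n + 1) / 2 = n by lia]

theorem bijective_interleave : Function.Bijective (interleave : (ℕ → α × α) → ℕ → α) := by
  refine Function.bijective_iff_has_inverse.2
    ⟨fun c n => (c (2 * n), c (2 * n + 1)), fun d => ?_, fun c => ?_⟩
  · funext n
    exact Prod.ext (interleave_two_mul d n) (interleave_two_mul_add_one d n)
  · funext n
    obtain ⟨m, rfl | rfl⟩ := n.even_or_odd'
    exacts [interleave_two_mul _ m, interleave_two_mul_add_one _ m]

theorem continuous_interleave [TopologicalSpace α] :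
    Continuous (interleave : (ℕ → α × α) → ℕ → α) := by
  refine continuous_pi fun n => ?_
  unfold interleave
  split_ifs
  exacts [continuous_fst.comp (continuous_apply _), continuous_snd.comp (continuous_apply _)]

theorem mem_cylinder_of_interleave_mem_cylinder {c d : ℕ → α × α} {n : ℕ}
    (h : interleave c ∈ cylinder (interleave d) (2 * n)) : c ∈ cylinder d n := by
  refine mem_cylinder_iff.2 fun i hi => Prod.ext ?_ ?_
  · simpa only [interleave_two_mul] using mem_cylinder_iff.1 h (2 * i) (by lia)
  · simpa only [interleave_two_mul_add_one] using mem_cylinder_iff.1 h (2 * i + 1) (by lia)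

theorem isGrowingCoding_interleave {X : Type*} [TopologicalSpace X] [TopologicalSpace α]
    {ρ : α → ℕ} {D : X → ℕ → α × α} (hD : IsGrowingCoding (ρ ∘ Prod.fst) D) :
    IsGrowingCoding ρ (interleave ∘ D) where
  continuous := continuous_interleave.comp hD.continuous
  bijective := bijective_interleave.comp hD.bijective
  exists_growsAt p U hU := by
    obtain ⟨n, K, hK⟩ := hD.exists_growsAt p U hU
    refine ⟨2 * n, K, fun x hx hKx => hK x (mem_cylinder_of_interleave_mem_cylinder hx) ?_⟩
    rwa [Function.comp, interleave_two_mul] at hKx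

end Interleave

section Product

open Filter Topology PiNat

variable {S : ℕ → Type*} {α β : Type*} {ρ : α → ℕ} {ρ' : β → ℕ} {e : ∀ i, S i → ℕ → α}
  {σ : ∀ n, (Fin (n + 1) → α) ≃ β}

/-- The product coding, whose `n`-th digit packs the `n`-th diagonal of the codes of the
coordinates. -/
def diagonalCoding (σ : ∀ n, (Fin (n + 1) → α) ≃ β) (e : ∀ i, S i → ℕ → α) (x : ∀ i, S i) (n : ℕ) :
    β :=
  σ n (diagonals (fun i => e i (x i)) n)

theorem mem_cylinder_of_diagonalCoding_mem_cylinder {x y : ∀ i, S i} {n i : ℕ}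
    (h : diagonalCoding σ e x ∈ cylinder (diagonalCoding σ e y) n) :
    e i (x i) ∈ cylinder (e i (y i)) (n - i) :=
  mem_cylinder_of_diagonals_mem_cylinder (a := fun i => e i (x i)) <|
    mem_cylinder_iff.2 fun k hk => (σ k).injective (mem_cylinder_iff.1 h k hk)

theorem bijective_diagonalCoding (he : ∀ i, Function.Bijective (e i)) :
    Function.Bijective (diagonalCoding σ e) :=
  (Function.Bijective.piMap fun n => (σ n).bijective).comp
    (bijective_diagonals.comp (Function.Bijective.piMap he))

variable [∀ i, TopologicalSpace (S i)] [TopologicalSpace α]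

theorem continuous_diagonalCoding [DiscreteTopology α] [TopologicalSpace β]
    (he : ∀ i, Continuous (e i)) : Continuous (diagonalCoding σ e) :=
  continuous_pi fun n => continuous_of_discreteTopology.comp <| continuous_pi fun i =>
    (continuous_apply (n - i : ℕ)).comp ((he i).comp (continuous_apply (i : ℕ)))

theorem exists_growsAt_diagonalCoding (he : ∀ i, IsEventuallyGrowingCoding ρ (e i))
    (hσ : ∀ n w i, ρ' (σ n w) ≤ ρ (w i)) (p : ∀ i, S i) {U : Set (∀ i, S i)} (hU : U ∈ 𝓝 p) :
    ∃ n, GrowsAt ρ' (diagonalCoding σ e) p U n := by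
  rw [nhds_pi, Filter.mem_pi] at hU
  obtain ⟨I, hI, V, hV, hVU⟩ := hU
  have hgrows : ∀ᶠ n in atTop, ∀ i ∈ I, i ≤ n ∧ GrowsAt ρ (e i) (p i) (V i) (n - i) :=
    (eventually_all_finite hI).2 fun i _ => (eventually_ge_atTop i).and <|
      (tendsto_sub_atTop_nat i).eventually ((he i).eventually_growsAt _ _ (hV i))
  obtain ⟨n, hn⟩ := hgrows.exists
  choose! K hK using fun i hi => (hn i hi).2
  obtain ⟨M, hM⟩ := (hI.image K).bddAbove
  refine ⟨n, M, fun x hx hMx => hVU fun i hi =>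
    hK i hi (x i) (mem_cylinder_of_diagonalCoding_mem_cylinder hx) ?_⟩
  calc K i ≤ M := hM (mem_image_of_mem K hi)
    _ ≤ ρ' (diagonalCoding σ e x n) := hMx
    _ ≤ ρ (e i (x i) (n - i)) := hσ n _ ⟨i, Nat.lt_succ_of_le (hn i hi).1⟩

theorem isGrowingCoding_diagonalCoding [DiscreteTopology α] [TopologicalSpace β]
    (he : ∀ i, IsEventuallyGrowingCoding ρ (e i)) (hσ : ∀ n w i, ρ' (σ n w) ≤ ρ (w i)) :
    IsGrowingCoding ρ' (diagonalCoding σ e) where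
  continuous := continuous_diagonalCoding fun i => (he i).continuous
  bijective := bijective_diagonalCoding fun i => (he i).bijective
  exists_growsAt p _ hU := exists_growsAt_diagonalCoding he hσ p hU

theorem exists_isPiTree_pi {e : ∀ i, S i → ℕ → ℕ × ℕ}
    (he : ∀ i, IsEventuallyGrowingCoding Prod.fst (e i)) :
    ∃ F : FoliageTree (∀ i, S i), F.IsPiTree := by
  choose σ hσ using fun n => exists_equiv_prod_fst_le (ι := Fin (n + 1))
  exact ⟨_, FoliageTree.isPiTree_ofCoding <| isGrowingCoding_interleave <|
    isGrowingCoding_diagonalCoding he hσ⟩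

end Product

section IcoPartitions

open scoped Function

/-- The half-open interval with the given pair of endpoints. -/
abbrev cell {L : Type*} [Preorder L] (I : L × L) : Set L := Ico I.1 I.2

variable {L : Type*} [LinearOrder L] {u : ℕ → L} {a b x y : L}

theorem iUnion_Ico_succ_eq_Ico (hu : Monotone u) (hub : ∀ n, u n ≤ b)
    (hcofinal : ∀ t < b, ∃ n, t < u n) : ⋃ n, Ico (u n) (u (n + 1)) = Ico (u 0) b := by
  refine Subset.antisymm
    (iUnion_subset fun n => Ico_subset_Ico (hu n.zero_le) (hub (n + 1))) fun t ht => ?_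
  have hexists := hcofinal t ht.2
  obtain ⟨n, hn⟩ := Nat.exists_eq_succ_of_ne_zero fun h0 : Nat.find hexists = 0 =>
    ht.1.not_gt (h0 ▸ Nat.find_spec hexists)
  exact mem_iUnion.2
    ⟨n, not_lt.1 (Nat.find_min hexists (by lia)), by simpa [hn] using Nat.find_spec hexists⟩

theorem iUnion_Ico_succ_eq_Ioo (hu : Antitone u) (hxu : ∀ n, x < u n)
    (hcoinitial : ∀ t, x < t → ∃ n, u n ≤ t) : ⋃ n, Ico (u (n + 1)) (u n) = Ioo x (u 0) := by
  refine Subset.antisymm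
    (iUnion_subset fun n t ht => ⟨(hxu _).trans_le ht.1, ht.2.trans_le (hu n.zero_le)⟩)
    fun t ht => ?_
  have hexists := hcoinitial t ht.1
  obtain ⟨n, hn⟩ := Nat.exists_eq_succ_of_ne_zero fun h0 : Nat.find hexists = 0 =>
    ht.2.not_ge (h0 ▸ Nat.find_spec hexists)
  exact mem_iUnion.2
    ⟨n, by simpa [hn] using Nat.find_spec hexists, not_le.1 (Nat.find_min hexists (by lia))⟩

variable [DenselyOrdered L] [TopologicalSpace L] [OrderTopology L] [FirstCountableTopology L]

theorem exists_strictMono_cofinal (hab : a < b) :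
    ∃ u : ℕ → L, StrictMono u ∧ u 0 = a ∧ (∀ n, u n < b) ∧ ∀ t < b, ∃ n, t < u n := by
  obtain ⟨w, hw, hwmem, hwb⟩ := exists_seq_strictMono_tendsto' hab
  refine ⟨fun | 0 => a | n + 1 => w n, strictMono_nat_of_lt_succ ?_, rfl, ?_, fun t ht => ?_⟩
  · rintro (_ | n)
    exacts [(hwmem 0).1, hw n.lt_succ_self]
  · rintro (_ | n)
    exacts [hab, (hwmem n).2]
  · obtain ⟨n, hn⟩ := (hwb.eventually_const_lt ht).exists
    exact ⟨n + 1, hn⟩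

theorem exists_strictAnti_coinitial (hxy : x < y) :
    ∃ u : ℕ → L, StrictAnti u ∧ u 0 = y ∧ (∀ n, x < u n) ∧ ∀ t, x < t → ∃ n, u n < t :=
  exists_strictMono_cofinal (L := Lᵒᵈ) (OrderDual.toDual_lt_toDual.2 hxy)

theorem exists_strictMono_cofinal_notMem_Ioo (hab : a < b) (q : L) :
    ∃ u : ℕ → L, StrictMono u ∧ u 0 = a ∧ (∀ n, u n < b) ∧ (∀ t < b, ∃ n, t < u n) ∧
      ∀ n, q ∉ Ioo (u n) (u (n + 1)) := by
  obtain ⟨c, hc, hqc⟩ : ∃ c ∈ Ioo a b, q ∈ Ioo a b → q = c := by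
    by_cases hq : q ∈ Ioo a b
    · exact ⟨q, hq, fun _ => rfl⟩
    · obtain ⟨c, hc⟩ := exists_between hab
      exact ⟨c, hc, fun h => absurd h hq⟩
  obtain ⟨w, hw, rfl, hwb, hwcofinal⟩ := exists_strictMono_cofinal hc.2
  let u : ℕ → L := fun | 0 => a | n + 1 => w n
  have hu : StrictMono u := strictMono_nat_of_lt_succ <| by
    rintro (_ | n)
    exacts [hc.1, hw n.lt_succ_self]
  have hub : ∀ n, u n < b := by
    rintro (_ | n)
    exacts [hab, hwb n]
  refine ⟨u, hu, rfl, hub, fun t ht => (hwcofinal t ht).imp' (· + 1) fun _ => id, fun n hn => ?_⟩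
  have hq : q = u 1 := hqc ⟨(hu.monotone n.zero_le).trans_lt hn.1, hn.2.trans (hub (n + 1))⟩
  have hn0 : n < 1 := hu.lt_iff_lt.1 (hn.1.trans_eq hq)
  have hn1 : 1 < n + 1 := hu.lt_iff_lt.1 (hq.symm.trans_lt hn.2)
  lia

theorem exists_iUnion_cell_eq_Ico_diff {A : Set L} (hxy : x < y) (hA : A ∩ Ico x y ⊆ {x}) :
    ∃ J : ℕ → L × L, (∀ n, (J n).1 < (J n).2) ∧ Pairwise (Disjoint on fun n => cell (J n)) ∧
      ⋃ n, cell (J n) = Ico x y \ A := by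
  by_cases hx : x ∈ A
  · obtain ⟨u, hu, rfl, hxu, hcoinitial⟩ := exists_strictAnti_coinitial hxy
    refine ⟨fun n => (u (n + 1), u n), fun n => hu n.lt_succ_self,
      hu.antitone.pairwise_disjoint_on_Ico_succ, ?_⟩
    rw [iUnion_Ico_succ_eq_Ioo hu.antitone hxu fun t ht => (hcoinitial t ht).imp fun _ => le_of_lt,
      ← Ico_sdiff_left]
    refine Subset.antisymm (fun t ht => ⟨ht.1, fun htA => ht.2 (hA ⟨htA, ht.1⟩)⟩) ?_
    exact sdiff_subset_sdiff_right (singleton_subset_iff.2 hx)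
  · obtain ⟨u, hu, rfl, huy, hcofinal⟩ := exists_strictMono_cofinal hxy
    refine ⟨fun n => (u n, u (n + 1)), fun n => hu n.lt_succ_self,
      hu.monotone.pairwise_disjoint_on_Ico_succ, ?_⟩
    rw [iUnion_Ico_succ_eq_Ico hu.monotone (fun n => (huy n).le) hcofinal, eq_comm, sdiff_eq_left]
    exact disjoint_left.2 fun t ht htA => hx (hA ⟨htA, ht⟩ ▸ htA)

end IcoPartitions

section Scheme

open Filter Topology PiNat
open scoped Function

variable {L : Type*} [LinearOrder L] {D : Set L}

/-- A partition of the cell `I`, with the point `q` removed if it belongs to `D`, into countably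
many cells `J d` none of which has `q` in its interior, such that the cells with large `d.1` are
close to the right endpoint of `I`. -/
structure IsSplitting (D : Set L) (q : L) (I : L × L) (J : ℕ × ℕ → L × L) : Prop where
  lt : ∀ d, (J d).1 < (J d).2
  right_lt : ∀ d, (J d).2 < I.2
  disjoint : Pairwise (Disjoint on fun d => cell (J d))
  iUnion_eq : ⋃ d, cell (J d) = cell I \ (D ∩ {q})
  notMem_Ioo : ∀ d, q ∉ Ioo (J d).1 (J d).2
  exists_forall_le_left : ∀ t < I.2, ∃ K, ∀ d, K ≤ d.1 → t ≤ (J d).1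

theorem exists_isSplitting [DenselyOrdered L] [TopologicalSpace L] [OrderTopology L]
    [FirstCountableTopology L] (D : Set L) (q : L) {I : L × L} (hI : I.1 < I.2) :
    ∃ J, IsSplitting D q I J := by
  obtain ⟨u, hu, hu0, hub, hcofinal, hq⟩ := exists_strictMono_cofinal_notMem_Ioo hI q
  have hpartition (k : ℕ) := exists_iUnion_cell_eq_Ico_diff (A := D ∩ {q}) (hu k.lt_succ_self) <| by
    rintro _ ⟨⟨_, rfl⟩, hqk⟩
    exact hqk.1.eq_or_lt.elim Eq.symm fun h => absurd ⟨h, hqk.2⟩ (hq k)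
  choose P hlt hdisjoint hP using hpartition
  have hsub (k j : ℕ) : cell (P k j) ⊆ Ico (u k) (u (k + 1)) :=
    ((subset_iUnion _ j).trans_eq (hP k)).trans sdiff_subset
  have hleft (k j : ℕ) : u k ≤ (P k j).1 := ((Ico_subset_Ico_iff (hlt k j)).1 (hsub k j)).1
  have hright (k j : ℕ) : (P k j).2 ≤ u (k + 1) := ((Ico_subset_Ico_iff (hlt k j)).1 (hsub k j)).2
  refine ⟨fun d => P d.1 d.2, ⟨fun d => hlt _ _, fun d => (hright _ _).trans_lt (hub _), ?_, ?_,
    fun d hd => hq d.1 ⟨(hleft _ _).trans_lt hd.1, hd.2.trans_le (hright _ _)⟩, fun t ht => ?_⟩⟩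
  · rintro ⟨k, j⟩ ⟨k', j'⟩ hne
    obtain rfl | hk := eq_or_ne k k'
    · exact hdisjoint k fun hj => hne (congrArg _ hj)
    · exact (hu.monotone.pairwise_disjoint_on_Ico_succ hk).mono (hsub k j) (hsub k' j')
  · simp only [iUnion_prod', hP]
    rw [← iUnion_sdiff, iUnion_Ico_succ_eq_Ico hu.monotone (fun n => (hub n).le) hcofinal, hu0]
  · obtain ⟨K, hK⟩ := hcofinal t ht
    exact ⟨K, fun d hd => (hK.le.trans (hu.monotone hd)).trans (hleft _ _)⟩

/-- A tree of cells below the whole order, in which the cells at level `n` are split with respect to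
the point `q n`. The digits of a node are listed from the last to the first, as in `PiNat.res`. -/
structure IsSplittingScheme [BoundedOrder L] (D : Set L) (q : ℕ → L)
    (C : List (ℕ × ℕ) → L × L) : Prop where
  nil : C [] = (⊥, ⊤)
  isSplitting : ∀ l, IsSplitting D (q l.length) (C l) fun d => C (d :: l)

theorem exists_isSplittingScheme [BoundedOrder L] [Nontrivial L] [DenselyOrdered L]
    [TopologicalSpace L] [OrderTopology L] [FirstCountableTopology L] (D : Set L) (q : ℕ → L) :
    ∃ C, IsSplittingScheme D q C := by
  choose! J hJ using fun q (I : L × L) (hI : I.1 < I.2) => exists_isSplitting D q hI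
  let C : List (ℕ × ℕ) → L × L := List.rec (⊥, ⊤) fun d l I => J (q l.length) I d
  have hlt (l : List (ℕ × ℕ)) : (C l).1 < (C l).2 := by
    induction l with
    | nil => exact bot_lt_top
    | cons d l ih => exact (hJ _ _ ih).lt d
  exact ⟨C, rfl, fun l => hJ _ _ (hlt l)⟩

namespace IsSplittingScheme

variable [BoundedOrder L] {q : ℕ → L} {C : List (ℕ × ℕ) → L × L} (hC : IsSplittingScheme D q C)
include hC

theorem cell_cons_subset (d : ℕ × ℕ) (l : List (ℕ × ℕ)) : cell (C (d :: l)) ⊆ cell (C l) :=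
  (subset_iUnion (fun d => cell (C (d :: l))) d).trans <|
    (hC.isSplitting l).iUnion_eq.trans_subset sdiff_subset

theorem eq_of_mem_of_mem {t : L} {l l' : List (ℕ × ℕ)} (hll' : l.length = l'.length)
    (hl : t ∈ cell (C l)) (hl' : t ∈ cell (C l')) : l = l' := by
  induction l generalizing l' with
  | nil => exact (List.length_eq_zero_iff.1 hll'.symm).symm
  | cons d l ih =>
    obtain ⟨d', l', rfl⟩ := List.exists_cons_of_length_eq_add_one hll'.symm
    obtain rfl := ih (Nat.succ_injective hll') (hC.cell_cons_subset d l hl)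
      (hC.cell_cons_subset d' l' hl')
    rw [(hC.isSplitting l).disjoint.eq (not_disjoint_iff.2 ⟨t, hl, hl'⟩)]

theorem antitone_cell_res (d : ℕ → ℕ × ℕ) : Antitone fun n => cell (C (res d n)) :=
  antitone_nat_of_succ_le fun n => hC.cell_cons_subset (d n) (res d n)

theorem exists_forall_mem_cell_res {t : L} (ht : t ∉ D) (htop : t ≠ ⊤) :
    ∃ d, ∀ n, t ∈ cell (C (res d n)) := by
  have hstep (l : List (ℕ × ℕ)) (hl : t ∈ cell (C l)) : ∃ d, t ∈ cell (C (d :: l)) :=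
    mem_iUnion.1 <| (hC.isSplitting l).iUnion_eq.ge ⟨hl, fun h => ht h.1⟩
  choose! next hnext using hstep
  let s (n : ℕ) : List (ℕ × ℕ) := n.rec [] fun _ l => next l :: l
  have hs (n : ℕ) : res (fun n => next (s n)) n = s n := by
    induction n with
    | zero => rfl
    | succ n ih => rw [res_succ, ih]
  refine ⟨fun n => next (s n), fun n => ?_⟩
  rw [hs]
  induction n with
  | zero => exact hC.nil.symm ▸ ⟨bot_le, htop.lt_top⟩
  | succ n ih => exact hnext _ ih

theorem notMem_cell_res {m n : ℕ} (hmn : m < n) (d : ℕ → ℕ × ℕ) (hm : q m ∈ D) :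
    q m ∉ cell (C (res d n)) := fun h => by
  have := (hC.isSplitting (res d m)).iUnion_eq.le
    (mem_iUnion.2 ⟨d m, hC.antitone_cell_res d (Nat.succ_le_of_lt hmn) h⟩)
  exact this.2 ⟨hm, by simp⟩

theorem left_lt_right (l : List (ℕ × ℕ)) : (C l).1 < (C l).2 :=
  nonempty_Ico.1 <| (nonempty_Ico.2 ((hC.isSplitting l).lt 0)).mono (hC.cell_cons_subset 0 l)

theorem left_mem_cell_res {m n : ℕ} (hmn : m ≤ n) (d : ℕ → ℕ × ℕ) :
    (C (res d n)).1 ∈ cell (C (res d m)) :=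
  hC.antitone_cell_res d hmn (left_mem_Ico.2 (hC.left_lt_right _))

theorem notMem_Ioo_res {m n : ℕ} (hmn : m < n) (d : ℕ → ℕ × ℕ) :
    q m ∉ Ioo (C (res d n)).1 (C (res d n)).2 := fun h => by
  refine (hC.isSplitting (res d m)).notMem_Ioo (d m) ?_
  rw [res_length, ← res_succ]
  exact ⟨(hC.left_mem_cell_res hmn d).1.trans_lt h.1,
    (hC.antitone_cell_res d hmn (Ioo_subset_Ico_self h)).2⟩

theorem eq_of_forall_mem_cell_res [TopologicalSpace L] [OrderTopology L] [DenselyOrdered L]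
    (hq : DenseRange q) {d : ℕ → ℕ × ℕ} {s t : L} (hs : ∀ n, s ∈ cell (C (res d n)))
    (ht : ∀ n, t ∈ cell (C (res d n))) : s = t := by
  wlog hst : s < t generalizing s t
  · exact (not_lt.1 hst).lt_or_eq.elim (fun h => (this ht hs h).symm) Eq.symm
  obtain ⟨_, ⟨m, rfl⟩, hsm, hmt⟩ := hq.exists_between hst
  exact absurd ⟨(hs (m + 1)).1.trans_lt hsm, hmt.trans (ht (m + 1)).2⟩
    (hC.notMem_Ioo_res m.lt_succ_self d)

end IsSplittingScheme

theorem IsSplittingScheme.exists_notMem_forall_mem_cell_res {L : Type*} [CompleteLinearOrder L]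
    {D : Set L} {q : ℕ → L} {C : List (ℕ × ℕ) → L × L} (hC : IsSplittingScheme D q C)
    (hD : D ⊆ range q) (d : ℕ → ℕ × ℕ) : ∃ t ∉ D, ∀ n, t ∈ cell (C (res d n)) := by
  have hle (m n : ℕ) : (C (res d m)).1 ≤ (C (res d n)).2 :=
    (hC.left_mem_cell_res (le_max_left m n) d).1.trans
      (hC.left_mem_cell_res (le_max_right m n) d).2.le
  have hmem (n : ℕ) : ⨆ m, (C (res d m)).1 ∈ cell (C (res d n)) :=
    ⟨le_iSup (fun m => (C (res d m)).1) n,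
      (iSup_le fun m => hle m (n + 1)).trans_lt ((hC.isSplitting _).right_lt (d n))⟩
  refine ⟨_, fun ht => ?_, hmem⟩
  obtain ⟨m, hm⟩ := hD ht
  exact hC.notMem_cell_res m.lt_succ_self d (hm ▸ ht) (hm ▸ hmem (m + 1))

section Itinerary

variable [BoundedOrder L] {q : ℕ → L} {C : List (ℕ × ℕ) → L × L} (hC : IsSplittingScheme D q C)
  {S : Type*} {v : S → L} {e : S → ℕ → ℕ × ℕ} (he : ∀ p n, v p ∈ cell (C (res (e p) n)))
include hC he

theorem mem_cylinder_iff_mem_cell {p x : S} {n : ℕ} :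
    e x ∈ cylinder (e p) n ↔ v x ∈ cell (C (res (e p) n)) := by
  rw [cylinder_eq_res]
  exact ⟨fun h : res _ n = _ => h ▸ he x n, hC.eq_of_mem_of_mem (by simp) (he x n)⟩

variable [TopologicalSpace S] (hv : ∀ p, (𝓝 p).HasBasis (v p < ·) fun b => v ⁻¹' Ico (v p) b)
include hv

theorem eventually_mem_cylinder (p : S) (n : ℕ) : ∀ᶠ x in 𝓝 p, e x ∈ cylinder (e p) n := by
  filter_upwards [(hv p).mem_of_mem (he p n).2] with x hx
  exact (mem_cylinder_iff_mem_cell hC he).2 ⟨(he p n).1.trans hx.1, hx.2⟩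

theorem continuous_of_forall_mem_cell : Continuous e := by
  refine continuous_pi fun n => continuous_discrete_rng.2 fun b => isOpen_iff_mem_nhds.2 ?_
  rintro p rfl
  filter_upwards [eventually_mem_cylinder hC he hv p (n + 1)] with x hx using hx n n.lt_succ_self

theorem eventually_growsAt [TopologicalSpace L] [OrderTopology L] [DenselyOrdered L]
    (hq : DenseRange q) {p : S} {U : Set S} (hU : U ∈ 𝓝 p) :
    ∀ᶠ n in atTop, GrowsAt Prod.fst e p U n := by
  obtain ⟨b, hb, hbU⟩ := (hv p).mem_iff.1 hU
  obtain ⟨_, ⟨m, rfl⟩, hpm, hmb⟩ := hq.exists_between hb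
  filter_upwards [eventually_gt_atTop m] with n hmn
  have hright : (C (res (e p) n)).2 ≤ q m := not_lt.1 fun h =>
    hC.notMem_Ioo_res hmn (e p) ⟨(he p n).1.trans_lt hpm, h⟩
  obtain ⟨K, hK⟩ := (hC.isSplitting _).exists_forall_le_left (v p) (he p n).2
  refine ⟨K, fun x hx hKx => hbU ⟨(hK (e x n) hKx).trans ?_,
    ((mem_cylinder_iff_mem_cell hC he).1 hx).2.trans_le (hright.trans hmb.le)⟩⟩
  rw [← show res (e x) n = res (e p) n from (cylinder_eq_res (e p) n).le hx, ← res_succ]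
  exact (he x (n + 1)).1

end Itinerary

end Scheme

section CocountableEmbedding

open Topology

theorem exists_subset_range_denseRange {L : Type*} [TopologicalSpace L]
    [TopologicalSpace.SeparableSpace L] [Nonempty L] {D : Set L} (hD : D.Countable) :
    ∃ q : ℕ → L, D ⊆ range q ∧ DenseRange q := by
  obtain ⟨s, hs, hsdense⟩ := TopologicalSpace.exists_countable_dense L
  obtain ⟨q, hq⟩ := (hD.union hs).exists_eq_range (hsdense.nonempty.inr)
  exact ⟨q, hq ▸ subset_union_left, hsdense.mono (hq ▸ subset_union_right)⟩

theorem exists_isEventuallyGrowingCoding {S L : Type*} [TopologicalSpace S] [CompleteLinearOrder L]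
    [Nontrivial L] [DenselyOrdered L] [TopologicalSpace L] [OrderTopology L]
    [FirstCountableTopology L] [TopologicalSpace.SeparableSpace L] {v : S → L}
    (hinj : Function.Injective v) (hD : (range v)ᶜ.Countable) (htop : ⊤ ∉ range v)
    (hv : ∀ p, (𝓝 p).HasBasis (v p < ·) fun b => v ⁻¹' Ico (v p) b) :
    ∃ e : S → ℕ → ℕ × ℕ, IsEventuallyGrowingCoding Prod.fst e := by
  obtain ⟨q, hDq, hq⟩ := exists_subset_range_denseRange hD
  obtain ⟨C, hC⟩ := exists_isSplittingScheme (range v)ᶜ q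
  choose e he using fun p => hC.exists_forall_mem_cell_res (t := v p) (not_not.2 (mem_range_self p))
    fun h => htop ⟨p, h⟩
  refine ⟨e, continuous_of_forall_mem_cell hC he hv, ⟨fun x y hxy => ?_, fun d => ?_⟩,
    fun p U => eventually_growsAt hC he hv hq⟩
  · exact hinj (hC.eq_of_forall_mem_cell_res hq (he x) (hxy ▸ he y))
  · obtain ⟨_, ht, hmem⟩ := hC.exists_notMem_forall_mem_cell_res hDq d
    obtain ⟨p, rfl⟩ := not_not.1 ht
    exact ⟨p, PiNat.res_injective <| funext fun n =>
      hC.eq_of_mem_of_mem (by simp) (he p n) (hmem n)⟩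

end CocountableEmbedding

section Sorgenfrey

open Topology

namespace SorgLine

/-- The inclusion of the Sorgenfrey line, as a set of reals, into the extended reals. -/
def toEReal (x : SorgLine) : EReal := (show ℝ from x)

theorem injective_toEReal : Function.Injective toEReal := EReal.coe_injective

theorem isTopologicalBasis_Ico :
    TopologicalSpace.IsTopologicalBasis (α := SorgLine) {s : Set ℝ | ∃ a b : ℝ, s = Ico a b} where
  exists_subset_inter := by
    rintro _ ⟨a, b, rfl⟩ _ ⟨c, d, rfl⟩ x hx
    exact ⟨_, ⟨a ⊔ c, b ⊓ d, rfl⟩, Ico_inter_Ico.subset hx, Ico_inter_Ico.superset⟩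
  sUnion_eq := eq_univ_of_forall fun x : ℝ =>
    ⟨(Ico x (x + 1) : Set ℝ), ⟨x, x + 1, rfl⟩, ⟨le_refl x, lt_add_one x⟩⟩
  eq_generateFrom := rfl

theorem hasBasis_nhds (p : SorgLine) :
    (𝓝 p).HasBasis (p.toEReal < ·) fun b => toEReal ⁻¹' Ico p.toEReal b := by
  refine ⟨fun U => isTopologicalBasis_Ico.mem_nhds_iff.trans ⟨?_, fun ⟨b, hpb, hbU⟩ => ?_⟩⟩
  · rintro ⟨_, ⟨a, b, rfl⟩, hp, habU⟩
    exact ⟨(b : EReal), EReal.coe_lt_coe_iff.2 hp.2, fun x hx =>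
      habU ⟨hp.1.trans (EReal.coe_le_coe_iff.1 hx.1), EReal.coe_lt_coe_iff.1 hx.2⟩⟩
  · obtain ⟨r, hpr, hrb⟩ := EReal.lt_iff_exists_real_btwn.1 hpb
    exact ⟨_, ⟨show ℝ from p, r, rfl⟩, ⟨le_refl (α := ℝ) p, EReal.coe_lt_coe_iff.1 hpr⟩, fun x hx =>
      hbU ⟨EReal.coe_le_coe_iff.2 hx.1, (EReal.coe_lt_coe_iff.2 hx.2).trans hrb⟩⟩

theorem range_toEReal : range toEReal = {⊥, ⊤}ᶜ := EReal.range_coe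

theorem countable_compl_range_toEReal_comp {S : Type*} {v : S → SorgLine}
    (hv : (range v)ᶜ.Countable) : (range (toEReal ∘ v))ᶜ.Countable := by
  refine ((hv.image toEReal).union (countable_singleton ⊤ |>.insert ⊥)).mono ?_
  rw [range_comp, injective_toEReal.compl_image_eq, range_toEReal, compl_compl]

theorem exists_isEventuallyGrowingCoding {S : Type*} [TopologicalSpace S] {v : S → SorgLine}
    (hv : IsEmbedding v) (hc : (range v)ᶜ.Countable) :
    ∃ e : S → ℕ → ℕ × ℕ, IsEventuallyGrowingCoding Prod.fst e :=
  _root_.exists_isEventuallyGrowingCoding (injective_toEReal.comp hv.injective)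
    (countable_compl_range_toEReal_comp hc) (fun ⟨_, hp⟩ => EReal.coe_ne_top _ hp)
    fun p => hv.nhds_eq_comap p ▸ (hasBasis_nhds (v p)).comap v

end SorgLine

theorem countable_powers_of_sorgenfrey_have_piTree_general {S : ℕ → Type u}
    [∀ i, TopologicalSpace (S i)] {v : ∀ i, S i → SorgLine} (hv : ∀ i, IsEmbedding (v i))
    (hc : ∀ i, (range (v i))ᶜ.Countable) : ∃ F : FoliageTree (∀ i, S i), F.IsPiTree := by
  choose e he using fun i => SorgLine.exists_isEventuallyGrowingCoding (hv i) (hc i)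
  exact exists_isPiTree_pi he

theorem countable_compl_irrSorg : IrrSorgᶜ.Countable := by
  have : IrrSorgᶜ = range ((↑) : ℚ → ℝ) := compl_compl _
  exact this ▸ countable_range _

end Sorgenfrey

/-- Countable powers of the Sorgenfrey line and of the irrational Sorgenfrey
line have π-trees. -/
theorem countable_powers_of_sorgenfrey_have_piTree :
    (∃ F : FoliageTree (ℕ → SorgLine), F.IsPiTree) ∧
      ∃ F : FoliageTree (ℕ → ↥IrrSorg), F.IsPiTree :=
  ⟨countable_powers_of_sorgenfrey_have_piTree_general (fun _ => .id) (by simp),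
    countable_powers_of_sorgenfrey_have_piTree_general (fun _ => .subtypeVal)
      fun _ => Subtype.range_coe.symm ▸ countable_compl_irrSorg⟩
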